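/- $\int_{0}^{\infty} \frac{\left(1 - e^{\pi\sqrt{3}\, x} \cos \pi x\right) e^{-\frac{2\pi}{\sqrt{3}} x}}{x \prod_{k=1}^{\infty}\left(1 + \frac{x^{3}}{k^{3}}\right)}\, dx = 0$. -/

import Mathlib

/-!
Put `c = e^{-iπ/3}`, so that `c² - c + 1 = 0` and `c³ = -1`, and consider
`H(w) = e^{-πw/√3} ∏_{k ≥ 1} (1 + w/k) / (1 + w/k + w²/k²)`,
which is holomorphic on `Re w > 0` and real on the positive axis.

On the ray `w = ct` the `k`-th factor equals `(1 - c²t²/k²) / (1 + t³/k³)`, so Euler's sine product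
turns `∏ (1 + t³/k³)` times the product in `H(ct)` into `sin(πct) / (πct)`. Writing the sine
through exponentials, the integrand of the theorem is exactly `Re (-2πi · c · H(ct))`
(`integrand_eq`).

It remains to rotate the ray of integration (`rotate_ray`): `∫ c H(ct) dt = ∫ H(t) dt` is real, so
its product with `-2πi` has real part `0`. The rotation is Cauchy's theorem on rectangles for
`z ↦ e^z H(e^z)`, and needs decay of `H` in the sector `|arg w| ≤ π/3`, i.e. `|w| ≤ 2 Re w`. There
each factor of the product satisfies `|factor|² ≤ 1 + r²/(k + r)²` with `r = |w|`, and these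
bounds telescope to `|∏| ≤ e^{r/2}` (`norm_Q_le`), while `|e^{-πw/√3}| ≤ e^{-3r/4}`.
-/

open Filter Topology MeasureTheory

/-! ### The infinite product and its growth in the sector -/

/-- The deviation from `1` of the factor `(1 + w/n) / (1 + w/n + w²/n²)`, where `n = k + 1`. -/
noncomputable def fac (k : ℕ) (w : ℂ) : ℂ :=
  -w ^ 2 / (((k : ℂ) + 1) ^ 2 + ((k : ℂ) + 1) * w + w ^ 2)

/-- The product of `(1 + w/n) / (1 + w/n + w²/n²)` over `n ≥ 1`, used for `Re w > 0`. -/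
noncomputable def Q (w : ℂ) : ℂ := ∏' k : ℕ, (1 + fac k w)

/-- `e^{-πw/√3} Q(w)`, the function whose ray of integration is rotated. -/
noncomputable def H (w : ℂ) : ℂ :=
  Complex.exp (-((Real.pi / Real.sqrt 3 : ℝ) : ℂ) * w) * Q w

lemma normSq_den (n : ℝ) (w : ℂ) :
    Complex.normSq ((n : ℂ) ^ 2 + n * w + w ^ 2) =
      n ^ 4 + 2 * n ^ 3 * w.re + (4 * w.re ^ 2 - ‖w‖ ^ 2) * n ^ 2
        + 2 * n * w.re * ‖w‖ ^ 2 + ‖w‖ ^ 4 := by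
  have h : ‖w‖ ^ 4 = (w.re * w.re + w.im * w.im) ^ 2 := by
    rw [← Complex.normSq_apply, ← Complex.sq_norm]; ring
  rw [h, Complex.sq_norm, Complex.normSq_apply, Complex.normSq_apply]
  simp [pow_two]
  ring

lemma den_lower {n : ℝ} (hn : 0 < n) {w : ℂ} (hw : 0 < w.re) :
    n ^ 2 / 4 ≤ ‖(n : ℂ) ^ 2 + n * w + w ^ 2‖ := by
  refine (pow_le_pow_iff_left₀ (by positivity) (norm_nonneg _) two_ne_zero).1 ?_
  rw [Complex.sq_norm, normSq_den]
  have h1 : 0 ≤ n ^ 3 * w.re := by positivity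
  have h2 : 0 ≤ n * w.re * ‖w‖ ^ 2 := by positivity
  have h3 : 0 ≤ w.re ^ 2 * n ^ 2 := by positivity
  nlinarith [sq_nonneg (n ^ 2 / 2 - ‖w‖ ^ 2), pow_pos hn 4]

lemma den_ne {n : ℝ} (hn : 0 < n) {w : ℂ} (hw : 0 < w.re) :
    (n : ℂ) ^ 2 + n * w + w ^ 2 ≠ 0 := by
  have := den_lower hn hw
  rw [← norm_pos_iff]
  have : 0 < n ^ 2 / 4 := by positivity
  linarith

lemma norm_fac_le (k : ℕ) {w : ℂ} (hw : 0 < w.re) :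
    ‖fac k w‖ ≤ 4 * ‖w‖ ^ 2 * (1 / ((k : ℝ) + 1) ^ 2) := by
  have hk : (0 : ℝ) < k + 1 := by positivity
  have h := den_lower hk hw
  push_cast at h
  rw [fac, norm_div, norm_neg, norm_pow]
  have h0 : (0 : ℝ) < ((k : ℝ) + 1) ^ 2 / 4 := by positivity
  calc _ ≤ ‖w‖ ^ 2 / (((k : ℝ) + 1) ^ 2 / 4) := by gcongr
    _ = _ := by field_simp

lemma summable_sq : Summable fun k : ℕ => 1 / ((k : ℝ) + 1) ^ 2 := by
  simpa using (summable_nat_add_iff 1).2 (Real.summable_one_div_nat_pow.2 (one_lt_two))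

lemma summable_fac {w : ℂ} (hw : 0 < w.re) : Summable fun k => ‖fac k w‖ :=
  Summable.of_nonneg_of_le (fun _ => norm_nonneg _) (fun k => norm_fac_le k hw)
    (summable_sq.mul_left _)

lemma multipliable_fac {w : ℂ} (hw : 0 < w.re) : Multipliable fun k => 1 + fac k w :=
  multipliable_one_add_of_summable (summable_fac hw)

lemma differentiableOn_fac (k : ℕ) : DifferentiableOn ℂ (fac k) {w | 0 < w.re} := by
  intro w hw
  have h := den_ne (n := k + 1) (by positivity) hw
  push_cast at h
  unfold fac
  exact (DifferentiableAt.div (c := fun w : ℂ => -w ^ 2)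
    (d := fun w : ℂ => ((k : ℂ) + 1) ^ 2 + ((k : ℂ) + 1) * w + w ^ 2)
    (by fun_prop) (by fun_prop) h).differentiableWithinAt

lemma differentiableOn_Q : DifferentiableOn ℂ Q {w | 0 < w.re} := by
  -- the summable majorant of `norm_fac_le` is uniform only on bounded parts of the half-plane
  have key (R : ℝ) : DifferentiableOn ℂ Q ({w | 0 < w.re} ∩ Metric.ball 0 R) := by
    have ho : IsOpen ({w : ℂ | 0 < w.re} ∩ Metric.ball 0 R) :=
      (isOpen_lt continuous_const Complex.continuous_re).inter Metric.isOpen_ball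
    have hd (k : ℕ) := (differentiableOn_fac k).mono
      (Set.inter_subset_left (t := Metric.ball (0 : ℂ) R))
    have := (summable_sq.mul_left (4 * R ^ 2)).hasProdLocallyUniformlyOn_nat_one_add (f := fac) ho
      (.of_forall fun k w hw => (norm_fac_le k hw.1).trans (by
        have : ‖w‖ < R := by simpa using hw.2
        gcongr))
      (fun k => (hd k).continuousOn)
    exact this.differentiableOn (.of_forall fun s => by
      simpa [Finset.prod_fn] using
        DifferentiableOn.finsetProd (fun k _ => (hd k).const_add 1)) ho
  intro w hw
  have hw' : w ∈ {w : ℂ | 0 < w.re} ∩ Metric.ball 0 (‖w‖ + 1) := ⟨hw, by simp⟩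
  refine ((key _).differentiableAt (IsOpen.mem_nhds ?_ hw')).differentiableWithinAt
  exact (isOpen_lt continuous_const Complex.continuous_re).inter Metric.isOpen_ball

/-- In the sector `‖w‖ ≤ 2 Re w`, each factor is bounded by a quantity depending on `‖w‖` only,
chosen so that the sum of the excesses over `1` telescopes to at most `‖w‖` (`sum_le`). -/
lemma normSq_factor_le (k : ℕ) {w : ℂ} (h0 : 0 < ‖w‖) (hw : ‖w‖ ≤ 2 * w.re) :
    ‖1 + fac k w‖ ^ 2 ≤ 1 + ‖w‖ ^ 2 / ((k : ℝ) + 1 + ‖w‖) ^ 2 := by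
  have hre : 0 < w.re := by linarith
  obtain ⟨n, hn, hnk⟩ : ∃ n : ℝ, 0 < n ∧ n = k + 1 := ⟨k + 1, by positivity, rfl⟩
  have hden := den_ne hn hre
  have hfac : 1 + fac k w = ((n : ℂ) ^ 2 + n * w) / ((n : ℂ) ^ 2 + n * w + w ^ 2) := by
    have : (n : ℂ) = k + 1 := by rw [hnk]; push_cast; rfl
    rw [fac, ← this, eq_div_iff hden, add_mul, div_mul_cancel₀ _ hden]
    ring
  have hnum : Complex.normSq ((n : ℂ) ^ 2 + n * w) = n ^ 4 + 2 * n ^ 3 * w.re + n ^ 2 * ‖w‖ ^ 2 := by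
    rw [Complex.sq_norm, Complex.normSq_apply, Complex.normSq_apply]
    simp [pow_two]
    ring
  have hD : 0 < Complex.normSq ((n : ℂ) ^ 2 + n * w + w ^ 2) := Complex.normSq_pos.2 hden
  rw [hfac, norm_div, div_pow, Complex.sq_norm, Complex.sq_norm, hnum, ← hnk, div_le_iff₀ hD,
    normSq_den]
  -- with `Re w = (r + e) / 2`, `e ≥ 0`, the difference of the two sides, cleared of denominators,
  -- is a polynomial in `r`, `n`, `e` with nonnegative coefficients only
  obtain ⟨e, he, her⟩ : ∃ e : ℝ, 0 ≤ e ∧ w.re = (‖w‖ + e) / 2 :=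
    ⟨2 * w.re - ‖w‖, by linarith, by ring⟩
  rw [her]
  generalize ‖w‖ = r at *
  rw [← sub_nonneg]
  have : 0 < n + r := by positivity
  field_simp
  ring_nf
  positivity

lemma sum_le (r : ℝ) (hr : 0 < r) (N : ℕ) :
    ∑ k ∈ Finset.range N, r ^ 2 / ((k : ℝ) + 1 + r) ^ 2 ≤ r - r ^ 2 / (N + r) := by
  induction N with
  | zero => simp; field_simp; simp
  | succ N ih =>
    rw [Finset.sum_range_succ]
    have : r ^ 2 / ((N : ℝ) + 1 + r) ^ 2 ≤ r ^ 2 / (N + r) - r ^ 2 / ((N : ℝ) + 1 + r) := by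
      have h1 : 0 < (N : ℝ) + r := by positivity
      rw [← sub_nonneg]
      have : r ^ 2 / (N + r) - r ^ 2 / ((N : ℝ) + 1 + r) - r ^ 2 / ((N : ℝ) + 1 + r) ^ 2
        = r ^ 2 / ((N + r) * ((N : ℝ) + 1 + r) ^ 2) := by
        field_simp
        ring
      rw [this]; positivity
    push_cast
    linarith

lemma norm_Q_le {w : ℂ} (h0 : 0 < ‖w‖) (hw : ‖w‖ ≤ 2 * w.re) : ‖Q w‖ ≤ Real.exp (‖w‖ / 2) := by
  have hre : 0 < w.re := by linarith
  have ht := (multipliable_fac hre).hasProd.tendsto_prod_nat.norm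
  refine le_of_tendsto' ht fun N => ?_
  refine (pow_le_pow_iff_left₀ (norm_nonneg _) (by positivity) two_ne_zero).1 ?_
  rw [norm_prod, ← Finset.prod_pow]
  calc _ ≤ ∏ k ∈ Finset.range N, (1 + ‖w‖ ^ 2 / ((k : ℝ) + 1 + ‖w‖) ^ 2) :=
        Finset.prod_le_prod (fun _ _ => by positivity) fun k _ => normSq_factor_le k h0 hw
    _ ≤ Real.exp (∑ k ∈ Finset.range N, ‖w‖ ^ 2 / ((k : ℝ) + 1 + ‖w‖) ^ 2) :=
        Real.prod_one_add_le_exp_sum _ fun _ => by positivity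
    _ ≤ Real.exp ‖w‖ := by
        have := sum_le ‖w‖ h0 N
        have h2 : 0 ≤ ‖w‖ ^ 2 / (N + ‖w‖) := by positivity
        gcongr
        linarith
    _ = _ := by rw [← Real.exp_nat_mul]; congr 1; push_cast; ring

lemma pi_div_sqrt : 3 / 2 ≤ Real.pi / Real.sqrt 3 := by
  have h3 : Real.sqrt 3 ≤ 2 := by rw [Real.sqrt_le_left (by norm_num)]; norm_num
  have := Real.pi_gt_three
  rw [le_div_iff₀ (by positivity)]
  linarith

lemma norm_H_le {w : ℂ} (h0 : 0 < ‖w‖) (hw : ‖w‖ ≤ 2 * w.re) :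
    ‖H w‖ ≤ Real.exp (-(1 / 4) * ‖w‖) := by
  rw [H, norm_mul, Complex.norm_exp]
  have := norm_Q_le h0 hw
  calc _ ≤ Real.exp (-(3 / 4) * ‖w‖) * Real.exp (‖w‖ / 2) := by
        gcongr
        rw [← Complex.ofReal_neg, Complex.re_ofReal_mul]
        nlinarith [pi_div_sqrt]
    _ = _ := by rw [← Real.exp_add]; congr 1; ring

lemma differentiableOn_H : DifferentiableOn ℂ H {w | 0 < w.re} := by
  unfold H
  exact DifferentiableOn.mul (by fun_prop) differentiableOn_Q

/-! ### Rotation of the ray of integration -/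

lemma image_exp_univ : Real.exp '' Set.univ = Set.Ioi 0 := by
  rw [Set.image_univ, Real.range_exp]

lemma integral_comp_exp (g : ℝ → ℂ) :
    ∫ x : ℝ, (Real.exp x : ℂ) * g (Real.exp x) = ∫ t in Set.Ioi 0, g t := by
  rw [← image_exp_univ]
  simpa [abs_of_pos (Real.exp_pos _)] using (integral_image_eq_integral_abs_deriv_smul
    MeasurableSet.univ (fun x _ => (Real.hasDerivAt_exp x).hasDerivWithinAt)
      Real.exp_injective.injOn g).symm

lemma integrable_comp_exp (g : ℝ → ℂ) :
    Integrable (fun x : ℝ => (Real.exp x : ℂ) * g (Real.exp x)) ↔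
      IntegrableOn g (Set.Ioi 0) := by
  rw [← image_exp_univ]
  simpa [abs_of_pos (Real.exp_pos _)] using (integrableOn_image_iff_integrableOn_abs_deriv_smul
    MeasurableSet.univ (fun x _ => (Real.hasDerivAt_exp x).hasDerivWithinAt)
      Real.exp_injective.injOn g).symm

section
variable {f : ℂ → ℂ} {δ : ℝ}

lemma integrableOn_ray (hδ : 0 < δ) (hd : DifferentiableOn ℂ f {w | 0 < w.re})
    (hb : ∀ w : ℂ, 0 < ‖w‖ → ‖w‖ ≤ 2 * w.re → ‖f w‖ ≤ Real.exp (-δ * ‖w‖))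
    {c : ℂ} (hc : ‖c‖ = 1) (hc' : 1 ≤ 2 * c.re) :
    IntegrableOn (fun t : ℝ => f (t * c)) (Set.Ioi 0) := by
  refine Integrable.mono' (exp_neg_integrableOn_Ioi 0 hδ) ?_ ?_
  · refine ContinuousOn.aestronglyMeasurable ?_ measurableSet_Ioi
    refine hd.continuousOn.comp (by fun_prop) fun t (ht : 0 < t) => ?_
    have : 0 < t * c.re := mul_pos ht (by linarith)
    simpa using this
  · filter_upwards [self_mem_ae_restrict measurableSet_Ioi] with t (ht : 0 < t)
    have hn : ‖(t : ℂ) * c‖ = t := by simp [hc, abs_of_pos ht]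
    have := hb (t * c) (by rw [hn]; exact ht) (by
      rw [hn, Complex.re_ofReal_mul]; nlinarith)
    rwa [hn] at this

lemma tendsto_mul_exp_exp (hδ : 0 < δ) :
    Tendsto (fun x => Real.exp x * Real.exp (-δ * Real.exp x)) atTop (𝓝 0) ∧
    Tendsto (fun x => Real.exp x * Real.exp (-δ * Real.exp x)) atBot (𝓝 0) := by
  constructor
  · have := (tendsto_rpow_mul_exp_neg_mul_atTop_nhds_zero 1 δ hδ).comp Real.tendsto_exp_atTop
    simpa [Function.comp_def] using this
  · have h : Tendsto (fun t : ℝ => t * Real.exp (-δ * t)) (𝓝 0) (𝓝 0) := by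
      have : Continuous (fun t : ℝ => t * Real.exp (-δ * t)) := by fun_prop
      simpa using this.tendsto 0
    exact h.comp Real.tendsto_exp_atBot

/-- A function holomorphic on the right half-plane and exponentially small in the sector
`|arg w| ≤ π/3` has the same integral along the rays of argument `0` and `-π/3`. In the coordinate
`z = log w` the two rays become the edges of a horizontal strip. -/
lemma rotate_ray (hδ : 0 < δ) (hd : DifferentiableOn ℂ f {w | 0 < w.re})
    (hb : ∀ w : ℂ, 0 < ‖w‖ → ‖w‖ ≤ 2 * w.re → ‖f w‖ ≤ Real.exp (-δ * ‖w‖)) :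
    ∫ t : ℝ in Set.Ioi 0, f t =
      Complex.exp (-(Real.pi / 3 : ℝ) * Complex.I) *
        ∫ t : ℝ in Set.Ioi 0, f (t * Complex.exp (-(Real.pi / 3 : ℝ) * Complex.I)) := by
  set θ : ℝ := Real.pi / 3 with hθ
  have hθ0 : 0 < θ := by positivity
  set c := Complex.exp (-(θ : ℂ) * Complex.I) with hc
  have hcn : ‖c‖ = 1 := by rw [hc, ← Complex.ofReal_neg, Complex.norm_exp_ofReal_mul_I]
  have hcre : c.re = 1 / 2 := by
    rw [hc, ← Complex.ofReal_neg, Complex.exp_ofReal_mul_I_re, Real.cos_neg, hθ,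
      Real.cos_pi_div_three]
  set h : ℂ → ℂ := fun z => Complex.exp z * f (Complex.exp z) with hh
  -- the closed strip `-θ ≤ Im z ≤ 0` is mapped by `exp` into the sector `‖w‖ ≤ 2 Re w`
  have hsec (z : ℂ) (h1 : -θ ≤ z.im) (h2 : z.im ≤ 0) :
      ‖Complex.exp z‖ ≤ 2 * (Complex.exp z).re := by
    have : 1 / 2 ≤ Real.cos z.im := by
      rw [← Real.cos_pi_div_three, ← Real.cos_neg z.im]
      exact Real.cos_le_cos_of_nonneg_of_le_pi (by linarith)
        (by linarith [Real.pi_pos]) (by linarith)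
    rw [Complex.norm_exp, Complex.exp_re]
    nlinarith [Real.exp_pos z.re]
  have hbd (z : ℂ) (h1 : -θ ≤ z.im) (h2 : z.im ≤ 0) :
      ‖h z‖ ≤ Real.exp z.re * Real.exp (-δ * Real.exp z.re) := by
    have := hb _ (by simp) (hsec z h1 h2)
    rw [hh, norm_mul]
    rw [Complex.norm_exp] at *
    gcongr
  have hdiff (z : ℂ) (h1 : -θ ≤ z.im) (h2 : z.im ≤ 0) : DifferentiableAt ℂ h z := by
    have : 0 < (Complex.exp z).re := by
      have := hsec z h1 h2
      have : 0 < ‖Complex.exp z‖ := by simp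
      linarith
    have hf : DifferentiableAt ℂ f (Complex.exp z) :=
      hd.differentiableAt ((isOpen_lt continuous_const Complex.continuous_re).mem_nhds this)
    exact Complex.differentiableAt_exp.mul (hf.comp z Complex.differentiableAt_exp)
  have hrect (n : ℝ) :
      (∫ x : ℝ in (-n)..n, h (x + (-θ : ℝ) * Complex.I)) - (∫ x : ℝ in (-n)..n, h x)
        + Complex.I • (∫ y : ℝ in (-θ)..0, h (n + y * Complex.I))
        - Complex.I • (∫ y : ℝ in (-θ)..0, h ((-n : ℝ) + y * Complex.I)) = 0 := by
    have := Complex.integral_boundary_rect_eq_zero_of_differentiableOn h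
      (⟨-n, -θ⟩ : ℂ) (⟨n, 0⟩ : ℂ) (fun z hz => by
        have hz2 := hz.2
        simp only [Set.mem_preimage, Set.uIcc_of_le (neg_nonpos.2 hθ0.le), Set.mem_Icc] at hz2
        exact (hdiff z hz2.1 hz2.2).differentiableWithinAt)
    simpa using this
  have hside (x : ℝ) : ‖∫ y : ℝ in (-θ)..0, h (x + y * Complex.I)‖ ≤
      Real.exp x * Real.exp (-δ * Real.exp x) * θ := by
    have := intervalIntegral.norm_integral_le_of_norm_le_const (a := -θ) (b := 0)
      (f := fun y : ℝ => h (x + y * Complex.I))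
      (C := Real.exp x * Real.exp (-δ * Real.exp x)) (fun y hy => by
        rw [Set.uIoc_of_le (neg_nonpos.2 hθ0.le)] at hy
        have := hbd (x + y * Complex.I) (by simpa using hy.1.le) (by simpa using hy.2)
        simpa using this)
    simpa [abs_of_pos hθ0] using this
  obtain ⟨ht1, ht2⟩ := tendsto_mul_exp_exp hδ
  have hr : Tendsto (fun n : ℝ => ∫ y : ℝ in (-θ)..0, h (n + y * Complex.I)) atTop (𝓝 0) :=
    squeeze_zero_norm hside (by simpa using ht1.mul_const θ)
  have hl : Tendsto (fun n : ℝ => ∫ y : ℝ in (-θ)..0, h ((-n : ℝ) + y * Complex.I))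
      atTop (𝓝 0) :=
    squeeze_zero_norm (fun n => hside (-n))
      (by simpa using (ht2.comp tendsto_neg_atTop_atBot).mul_const θ)
  have e0 (x : ℝ) : h x = (Real.exp x : ℂ) * f (Real.exp x) := by simp [hh]
  have e1 (x : ℝ) : h (x + (-θ : ℝ) * Complex.I) =
      (Real.exp x : ℂ) * (c * f (Real.exp x * c)) := by
    simp only [hh, Complex.exp_add, hc]
    push_cast
    ring
  have hi0 : Integrable fun x : ℝ => h x := by
    simp only [e0]
    rw [integrable_comp_exp (fun t => f t)]
    simpa using integrableOn_ray hδ hd hb (c := 1) (by simp) (by simp)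
  have hi1 : Integrable fun x : ℝ => h (x + (-θ : ℝ) * Complex.I) := by
    simp only [e1]
    rw [integrable_comp_exp (fun t => c * f (t * c))]
    exact (integrableOn_ray hδ hd hb hcn (by rw [hcre]; norm_num)).const_mul c
  have hlim := (((intervalIntegral_tendsto_integral hi1 tendsto_neg_atTop_atBot tendsto_id).sub
    (intervalIntegral_tendsto_integral hi0 tendsto_neg_atTop_atBot tendsto_id)).add
      (hr.const_smul Complex.I)).sub (hl.const_smul Complex.I)
  have hz := tendsto_nhds_unique hlim (tendsto_const_nhds.congr fun n => (hrect n).symm)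
  simp only [e0, e1, smul_zero, add_zero, sub_zero] at hz
  rw [integral_comp_exp (fun t => c * f (t * c)), integral_comp_exp (fun t => f t),
    integral_const_mul] at hz
  exact (sub_eq_zero.1 hz).symm
end

/-! ### The integrand on the rotated ray -/

lemma multipliable_cubic (t : ℝ) : Multipliable fun k : ℕ => 1 + t ^ 3 / ((k : ℝ) + 1) ^ 3 := by
  apply Real.multipliable_one_add_of_summable
  have : Summable fun k : ℕ => 1 / ((k : ℝ) + 1) ^ 3 := by
    simpa using (summable_nat_add_iff 1).2
      (Real.summable_one_div_nat_pow.2 (show 1 < 3 by norm_num))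
  simpa [div_eq_mul_inv] using this.mul_left (t ^ 3)

/-- For `c² - c + 1 = 0` the factors of `Q (t c)` and of `∏ (1 + t³/k³)` multiply to
`1 - (t c)²/k²`, the factors of Euler's sine product. -/
lemma sin_identity {c : ℂ} (hc : c ^ 2 = c - 1) (hre : 0 < c.re) {t : ℝ} (ht : 0 < t) :
    Real.pi * (t * c) * Q (t * c) * ((∏' k : ℕ, (1 + t ^ 3 / ((k : ℝ) + 1) ^ 3) : ℝ) : ℂ) =
      Complex.sin (Real.pi * (t * c)) := by
  have hre' : 0 < ((t : ℂ) * c).re := by rw [Complex.re_ofReal_mul]; positivity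
  have h1 := (multipliable_fac hre').hasProd.tendsto_prod_nat
  have h2 := (Complex.continuous_ofReal.tendsto _).comp (multipliable_cubic t).hasProd.tendsto_prod_nat
  have h3 := (h1.const_mul ((Real.pi : ℂ) * (t * c))).mul h2
  refine tendsto_nhds_unique h3 ((Complex.tendsto_euler_sin_prod (t * c)).congr fun n => ?_)
  simp only [Function.comp_apply]
  push_cast
  rw [mul_assoc _ (∏ _ ∈ _, _), ← Finset.prod_mul_distrib]
  congr 1
  refine Finset.prod_congr rfl fun k _ => ?_
  have hden := den_ne (n := k + 1) (by positivity) hre'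
  push_cast at hden
  have hk : (k : ℂ) + 1 ≠ 0 := by exact_mod_cast Nat.succ_ne_zero k
  have hc3 : c ^ 3 = -1 := by linear_combination (c + 1) * hc
  rw [fac]
  generalize (k : ℂ) + 1 = n at *
  rw [eq_comm, one_add_div hden]
  have : n ^ 2 + n * (t * c) + (t * c) ^ 2 + -(t * c) ^ 2 = n * (n + t * c) := by ring
  rw [this, one_add_div (pow_ne_zero 3 hk), one_sub_div (pow_ne_zero 2 hk), div_mul_div_comm,
    div_eq_div_iff (mul_ne_zero hden (pow_ne_zero 3 hk)) (pow_ne_zero 2 hk)]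
  linear_combination (n ^ 3 * t ^ 3 * (n + t * c)) * hc3

lemma H_im (t : ℝ) (ht : 0 < t) : (H t).im = 0 := by
  have hQ : (Q t).im = 0 := by
    have h1 := (multipliable_fac (w := t) (by simpa using ht)).hasProd.tendsto_prod_nat
    have hcl : IsClosed {z : ℂ | z.im = 0} :=
      isClosed_eq Complex.continuous_im continuous_const
    refine hcl.mem_of_tendsto h1 (.of_forall fun n => ?_)
    have : ∏ k ∈ Finset.range n, (1 + fac k t) = ((∏ k ∈ Finset.range n,
        (1 + -t ^ 2 / (((k : ℝ) + 1) ^ 2 + ((k : ℝ) + 1) * t + t ^ 2)) : ℝ) : ℂ) := by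
      push_cast [fac]
      rfl
    rw [this]
    exact Complex.ofReal_im _
  rw [H, Complex.mul_im, hQ, ← Complex.ofReal_neg, ← Complex.ofReal_mul, ← Complex.ofReal_exp,
    Complex.ofReal_im]
  simp

lemma integrand_eq {t : ℝ} (ht : 0 < t) :
    (1 - Real.exp (Real.pi * Real.sqrt 3 * t) * Real.cos (Real.pi * t)) *
          Real.exp (-(2 * Real.pi / Real.sqrt 3) * t) /
          (t * ∏' k : ℕ, (1 + t ^ 3 / ((k : ℝ) + 1) ^ 3)) =
    (-(2 * Real.pi * Complex.I) * (Complex.exp (-(Real.pi / 3 : ℝ) * Complex.I) *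
      H (t * Complex.exp (-(Real.pi / 3 : ℝ) * Complex.I)))).re := by
  obtain ⟨c, hc⟩ : ∃ c, c = Complex.exp (-(Real.pi / 3 : ℝ) * Complex.I) := ⟨_, rfl⟩
  obtain ⟨s, hs⟩ : ∃ s, s = Real.sqrt 3 := ⟨_, rfl⟩
  have hs2 : s ^ 2 = 3 := by rw [hs]; exact Real.sq_sqrt (by norm_num)
  have hs0 : 0 < s := by rw [hs]; positivity
  have hce : c = 1 / 2 - s / 2 * Complex.I := by
    rw [hc, ← Complex.ofReal_neg, Complex.exp_mul_I, ← Complex.ofReal_cos, ← Complex.ofReal_sin,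
      Real.cos_neg, Real.sin_neg, Real.cos_pi_div_three, Real.sin_pi_div_three, hs]
    push_cast
    ring
  have hs2' : (s : ℂ) ^ 2 = 3 := by exact_mod_cast hs2
  have hs0' : (s : ℂ) ≠ 0 := by exact_mod_cast hs0.ne'
  have hc2 : c ^ 2 = c - 1 := by
    rw [hce]
    linear_combination (s ^ 2 / 4 : ℂ) * Complex.I_sq - hs2' / 4
  have hcre : c.re = 1 / 2 := by rw [hce]; simp
  have hsin := sin_identity hc2 (by rw [hcre]; norm_num) ht
  rw [← hc, ← hs]
  set P : ℝ := ∏' k : ℕ, (1 + t ^ 3 / ((k : ℝ) + 1) ^ 3) with hP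
  have hP0 : 0 < P := one_pos.trans_le <|
    ge_of_tendsto' (multipliable_cubic t).hasProd.tendsto_prod_nat fun n =>
      Finset.one_le_prod fun k _ => by rw [le_add_iff_nonneg_right]; positivity
  have hP0' : (P : ℂ) ≠ 0 := by exact_mod_cast hP0.ne'
  have ht' : (t : ℂ) ≠ 0 := by exact_mod_cast ht.ne'
  have key : -(2 * Real.pi * Complex.I) * (c * H (t * c)) =
      (1 - Complex.exp ((Real.pi * s * t : ℝ) + (Real.pi * t : ℝ) * Complex.I)) *
        Complex.exp ((-(2 * Real.pi / s) * t : ℝ)) / ((t * P : ℝ) : ℂ) := by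
    rw [eq_div_iff (by push_cast; exact mul_ne_zero ht' hP0'), H, ← hs]
    have e : -(2 * Real.pi * Complex.I) * (c * (Complex.exp (-((Real.pi / s : ℝ) : ℂ) * (t * c))
        * Q (t * c))) * ((t * P : ℝ) : ℂ) = -2 * Complex.I *
        Complex.exp (-((Real.pi / s : ℝ) : ℂ) * (t * c)) * Complex.sin (Real.pi * (t * c)) := by
      rw [← hsin]
      push_cast
      ring
    rw [e, Complex.sin]
    have e2 (x a b : ℂ) : -2 * Complex.I * x * ((a - b) * Complex.I / 2) = x * a - x * b := by
      linear_combination (-(x * (a - b))) * Complex.I_sq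
    rw [e2, sub_mul, one_mul, ← Complex.exp_add, ← Complex.exp_add, ← Complex.exp_add]
    have hsinv (x : ℂ) : x / s = x * s / 3 := by
      rw [div_eq_div_iff hs0' (by norm_num)]; linear_combination -x * hs2'
    congr 2
    · push_cast
      rw [hce]
      rw [hsinv, hsinv]
      linear_combination (Real.pi * t * s / 2 : ℂ) * Complex.I_sq +
        (Real.pi * t * Complex.I / 6 : ℂ) * hs2'
    · push_cast
      rw [hce]
      rw [hsinv, hsinv]
      linear_combination (-Real.pi * t * s / 2 : ℂ) * Complex.I_sq +
        (Real.pi * t * Complex.I / 6 : ℂ) * hs2'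
  rw [key, Complex.div_ofReal_re, ← Complex.ofReal_exp, Complex.re_mul_ofReal, Complex.sub_re,
    Complex.exp_re]
  simp


/-- `∫₀^∞ (1 - e^{π√3 x} cos πx) e^{-2πx/√3} / (x ∏_{k=1}^∞ (1 + x³/k³)) dx = 0`. -/
theorem stmt_17 :
    ∫ x in Set.Ioi (0 : ℝ),
        (1 - Real.exp (Real.pi * Real.sqrt 3 * x) * Real.cos (Real.pi * x)) *
          Real.exp (-(2 * Real.pi / Real.sqrt 3) * x) /
          (x * ∏' k : ℕ, (1 + x ^ 3 / ((k : ℝ) + 1) ^ 3))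
      = 0 := by
  have hb : ∀ w : ℂ, 0 < ‖w‖ → ‖w‖ ≤ 2 * w.re → ‖H w‖ ≤ Real.exp (-(1 / 4) * ‖w‖) :=
    fun w => norm_H_le
  have hδ : (0 : ℝ) < 1 / 4 := by norm_num
  have hrot := rotate_ray hδ differentiableOn_H hb
  rw [setIntegral_congr_fun measurableSet_Ioi fun t ht => integrand_eq ht]
  have hint : IntegrableOn (fun t : ℝ => H (t * Complex.exp (-(Real.pi / 3 : ℝ) * Complex.I)))
      (Set.Ioi 0) := by
    refine integrableOn_ray hδ differentiableOn_H hb ?_ ?_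
    · rw [← Complex.ofReal_neg, Complex.norm_exp_ofReal_mul_I]
    · rw [← Complex.ofReal_neg, Complex.exp_ofReal_mul_I_re, Real.cos_neg,
        Real.cos_pi_div_three]
      norm_num
  have hre := integral_re ((hint.const_mul
    (Complex.exp (-(Real.pi / 3 : ℝ) * Complex.I))).const_mul (-(2 * Real.pi * Complex.I)))
  simp only [RCLike.re_eq_complex_re] at hre
  rw [hre, integral_const_mul, integral_const_mul, ← hrot]
  have hreal : ∫ t : ℝ in Set.Ioi 0, H t = ((∫ t : ℝ in Set.Ioi 0, (H t).re : ℝ) : ℂ) := by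
    rw [← integral_complex_ofReal]
    refine setIntegral_congr_fun measurableSet_Ioi fun t ht => ?_
    exact Complex.ext (by simp) (by simpa using H_im t ht)
  rw [hreal]
  simp
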